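/- arXiv:1402.6973 — 3 statements merged into one kernel-verified Lean document; each statement's English description precedes it below -/
import Mathlib

section
/- In any execution of algorithm ProactiveGreedy on a d-uniform arrival sequence with k ≤ d packets per frame, no packet ever expires: every arriving packet is either delivered by its deadline or is proactively dropped by the algorithm (in the drop steps) strictly before its deadline forces expiry. -/
/-! ## Model: d-uniform bounded-delay goodput ({\sc d-uBDG}) instances -/

/-- An arrival sequence for the `d`-uniform bounded-delay goodput problem:
`n` frames, each consisting of `k` unit-size packets; packet `(f, ℓ)` (the `ℓ`-th
packet of frame `f`, `0`-indexed) arrives at time `a f ℓ`, arrival times are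
nondecreasing within each frame, and every packet has deadline `a f ℓ + d`. -/
structure ArrivalSeq (n k d : ℕ) where
  a : Fin n → Fin k → ℕ
  mono : ∀ f : Fin n, Monotone (a f)

namespace ArrivalSeq

variable {n k d : ℕ}

/-- At most `b` packets arrive in any single time slot (maximum burst size `b`). -/
def BurstBound (A : ArrivalSeq n k d) (b : ℕ) : Prop :=
  ∀ t : ℕ, Set.ncard {p : Fin n × Fin k | A.a p.1 p.2 = t} ≤ b

/-- A feasible schedule: at most one packet is delivered per time slot, every packet is
delivered at most once, and every delivered packet is delivered between its arrival
time and its deadline. -/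
def IsSchedule (A : ArrivalSeq n k d) (S : ℕ → Option (Fin n × Fin k)) : Prop :=
  (∀ (p : Fin n × Fin k) (t t' : ℕ), S t = some p → S t' = some p → t = t') ∧
  ∀ (p : Fin n × Fin k) (t : ℕ), S t = some p →
    A.a p.1 p.2 ≤ t ∧ t ≤ A.a p.1 p.2 + d

/-- A frame is successful under schedule `S` if all of its packets are delivered. -/
def Successful (A : ArrivalSeq n k d) (S : ℕ → Option (Fin n × Fin k)) (f : Fin n) : Prop :=
  ∀ ℓ : Fin k, ∃ t : ℕ, S t = some (f, ℓ)

/-- The goodput of a schedule: the number of successful frames. -/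
noncomputable def Goodput (A : ArrivalSeq n k d) (S : ℕ → Option (Fin n × Fin k)) : ℕ :=
  Set.ncard {f : Fin n | A.Successful S f}

/-- `S` is an optimal (feasible) schedule for `A`. -/
def IsOptimal (A : ArrivalSeq n k d) (S : ℕ → Option (Fin n × Fin k)) : Prop :=
  A.IsSchedule S ∧
    ∀ S' : ℕ → Option (Fin n × Fin k), A.IsSchedule S' → A.Goodput S' ≤ A.Goodput S

end ArrivalSeq

/-! ## Executions of scheduling algorithms -/

/-- A trace of the execution of a scheduling algorithm on the arrival sequence `A`:
`deliver t` is the packet delivered at the scheduling substep of slot `t` (if any), and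
`dropTime p` is the slot at which packet `p` is dropped by the algorithm (if ever). -/
structure AlgExec {n k d : ℕ} (A : ArrivalSeq n k d) where
  deliver : ℕ → Option (Fin n × Fin k)
  dropTime : Fin n × Fin k → Option ℕ

namespace AlgExec

variable {n k d : ℕ} {A : ArrivalSeq n k d}

/-- packet `p` is delivered at some time `≤ t`. -/
def DeliveredBy (E : AlgExec A) (p : Fin n × Fin k) (t : ℕ) : Prop :=
  ∃ s ≤ t, E.deliver s = some p

/-- packet `p` is delivered at some point of the execution. -/
def Delivered (E : AlgExec A) (p : Fin n × Fin k) : Prop :=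
  ∃ s : ℕ, E.deliver s = some p

/-- packet `p` is dropped at some time `< t`. -/
def DroppedBefore (E : AlgExec A) (p : Fin n × Fin k) (t : ℕ) : Prop :=
  ∃ s < t, E.dropTime p = some s

/-- packet `p` is pending at (the scheduling substep of) slot `t`: it has arrived, its
deadline has not passed, and it has been neither delivered nor dropped before `t`. -/
def Pending (E : AlgExec A) (p : Fin n × Fin k) (t : ℕ) : Prop :=
  A.a p.1 p.2 ≤ t ∧ t ≤ A.a p.1 p.2 + d ∧
    ¬ (∃ s < t, E.deliver s = some p) ∧ ¬ E.DroppedBefore p t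

/-- frame `f` is alive at time `t`: none of its packets has been dropped before `t`,
nor has expired (i.e., reached its deadline undelivered) before `t`. -/
def Alive (E : AlgExec A) (f : Fin n) (t : ℕ) : Prop :=
  ∀ ℓ : Fin k, ¬ E.DroppedBefore (f, ℓ) t ∧
    (A.a f ℓ + d < t → E.DeliveredBy (f, ℓ) (A.a f ℓ + d))

/-- frame `f` has some pending packet at time `t`. -/
def HasPending (E : AlgExec A) (f : Fin n) (t : ℕ) : Prop :=
  ∃ ℓ : Fin k, E.Pending (f, ℓ) t

/-- `I_t(f)`: the index of the first (minimal-index) pending packet of `f` at time `t`. -/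
noncomputable def Iidx (E : AlgExec A) (t : ℕ) (f : Fin n) : ℕ :=
  sInf {ℓ : ℕ | ∃ h : ℓ < k, E.Pending (f, ⟨ℓ, h⟩) t}

/-- frame `f` is completed by the execution: all of its packets are delivered. -/
def Completed (E : AlgExec A) (f : Fin n) : Prop :=
  ∀ ℓ : Fin k, E.Delivered (f, ℓ)

/-- `w f`: the number of packets of frame `f` delivered by the execution. -/
noncomputable def w (E : AlgExec A) (f : Fin n) : ℕ :=
  Set.ncard {ℓ : Fin k | E.Delivered (f, ℓ)}

/-- the first time at which some packet of `f` is dropped. -/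
noncomputable def dropT (E : AlgExec A) (f : Fin n) : ℕ :=
  sInf {t : ℕ | ∃ ℓ : Fin k, E.dropTime (f, ℓ) = some t}

/-- the index of the first packet of `f` to be dropped (the minimal index among the
packets of `f` dropped at the first drop time of `f`). -/
noncomputable def firstDropIdx (E : AlgExec A) (f : Fin n) : ℕ :=
  sInf {ℓ : ℕ | ∃ h : ℓ < k, E.dropTime (f, ⟨ℓ, h⟩) = some (E.dropT f)}

/-! ### The algorithm `ProactiveGreedy` -/

/-- The defining conditions of an execution of `ProactiveGreedy` (with arbitrary
tie-breaking): at every slot `t`,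
(i) a delivered packet is the first pending packet of an alive frame maximizing
`I_t` among all alive frames with pending packets;
(ii) a packet is delivered whenever some alive frame has a pending packet; and
(iii) a packet is dropped at `t` exactly when it is pending at `t` and either its
frame is not alive at `t` (line 1 of the algorithm) or the packet delivered at `t`
belongs to a different frame (line 4: packets of all non-chosen frames are dropped). -/
def PGValid (E : AlgExec A) : Prop :=
  (∀ (t : ℕ) (f : Fin n) (ℓ : Fin k), E.deliver t = some (f, ℓ) →
      E.Alive f t ∧ E.Pending (f, ℓ) t ∧ (ℓ : ℕ) = E.Iidx t f ∧
      ∀ f' : Fin n, E.Alive f' t → E.HasPending f' t → E.Iidx t f' ≤ E.Iidx t f) ∧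
  (∀ t : ℕ, (∃ f : Fin n, E.Alive f t ∧ E.HasPending f t) → E.deliver t ≠ none) ∧
  (∀ (p : Fin n × Fin k) (t : ℕ), E.dropTime p = some t ↔
      E.Pending p t ∧
        (¬ E.Alive p.1 t ∨ ∃ q : Fin n × Fin k, E.deliver t = some q ∧ q.1 ≠ p.1))

/-! ### The mapping `φ` used in the analysis of `ProactiveGreedy` -/

open Classical in
/-- The frame onto which a frame `f ∉ F_PG` is *directly* mapped by the mapping `φ`:
the frame whose packet is delivered at the time `t_f` at which the first packet of `f`
is dropped.  Frames of `F_PG` are mapped to themselves. -/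
noncomputable def phiNext (E : AlgExec A) (f : Fin n) : Fin n :=
  if E.Completed f then f
  else
    match E.deliver (E.dropT f) with
    | some q => q.1
    | none => f

/-- the frame onto which `f` is mapped after `j` successive (re-)mappings of `φ`. -/
noncomputable def phiChain (E : AlgExec A) (f : Fin n) (j : ℕ) : Fin n :=
  (E.phiNext)^[j] f

/-- frame `f` is *directly* mapped by `φ` via the packet `q` (of the frame `q.1`):
`q` is the packet delivered at the time the first packet of `f` is dropped. -/
def PhiDirectVia (E : AlgExec A) (f : Fin n) (q : Fin n × Fin k) : Prop :=
  ¬ E.Completed f ∧ E.deliver (E.dropT f) = some q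

/-- frame `f` is mapped (directly or indirectly, i.e. after re-mappings) by `φ`
via the packet `q`; `M(q)` is the set of frames mapped via `q`. -/
def PhiMappedVia (E : AlgExec A) (f : Fin n) (q : Fin n × Fin k) : Prop :=
  ∃ j : ℕ, E.PhiDirectVia (E.phiChain f j) q

/-! ### The algorithm `Greedy` -/

/-- packet `p` is still pending after the scheduling substep of slot `t`. -/
def PendingAfter (E : AlgExec A) (p : Fin n × Fin k) (t : ℕ) : Prop :=
  E.Pending p t ∧ E.deliver t ≠ some p

/-- frame `f` is infeasible after the scheduling substep of slot `t`: for some pending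
packet `(f, ℓ)` the pending packets of `f` of index `≤ ℓ` cannot all be scheduled in
the slots `t+1, …, a f ℓ + d`. -/
noncomputable def Infeasible (E : AlgExec A) (f : Fin n) (t : ℕ) : Prop :=
  ∃ ℓ : Fin k, E.PendingAfter (f, ℓ) t ∧
    A.a f ℓ + d < t + Set.ncard {j : Fin k | j ≤ ℓ ∧ E.PendingAfter (f, j) t}

/-- The defining conditions of an execution of `Greedy` (with arbitrary tie-breaking):
at every slot `t`,
(i) a delivered packet is the first pending packet of an alive frame maximizing `I_t`
among all alive frames with pending packets;
(ii) a packet is delivered whenever some alive frame has a pending packet; and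
(iii) a packet is dropped at `t` exactly when it is pending at `t`, it is not the
packet delivered at `t`, and either its frame is not alive at `t`, or its residual
slack at `t` is `0` (it expires), or its frame becomes infeasible at `t` (cleanup). -/
noncomputable def GreedyValid (E : AlgExec A) : Prop :=
  (∀ (t : ℕ) (f : Fin n) (ℓ : Fin k), E.deliver t = some (f, ℓ) →
      E.Alive f t ∧ E.Pending (f, ℓ) t ∧ (ℓ : ℕ) = E.Iidx t f ∧
      ∀ f' : Fin n, E.Alive f' t → E.HasPending f' t → E.Iidx t f' ≤ E.Iidx t f) ∧
  (∀ t : ℕ, (∃ f : Fin n, E.Alive f t ∧ E.HasPending f t) → E.deliver t ≠ none) ∧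
  (∀ (p : Fin n × Fin k) (t : ℕ), E.dropTime p = some t ↔
      E.Pending p t ∧ E.deliver t ≠ some p ∧
        (¬ E.Alive p.1 t ∨ A.a p.1 p.2 + d = t ∨ E.Infeasible p.1 t))

/-- packet `p = (f, ℓ)` is *eligible* at time `t`: it is in the buffer (pending) at
`t`, its frame is alive at `t`, and `ℓ = I_t(f)`. -/
def Eligible (E : AlgExec A) (p : Fin n × Fin k) (t : ℕ) : Prop :=
  E.Alive p.1 t ∧ E.Pending p t ∧ (p.2 : ℕ) = E.Iidx t p.1

/-! ### The mapping `ψ` used in the analysis of `Greedy` -/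

/-- The mapping `ψ` used in the analysis of `Greedy`, relative to the set `O` of frames
of a fixed optimal schedule and the maximum burst size `b`.  Every frame of
`F_G` (completed by `Greedy`) is mapped to itself (encoded as `dm f = none`); every
frame `f ∉ F_G` is directly mapped via a packet `q` delivered by `Greedy` no later than
the drop time `t_f` of `f`, whose index is at least the index of the first dropped
packet of `f`; every delivered packet has at most `2` frames of `O` and at most `b`
frames in total directly mapped to it. -/
structure PsiMapping (E : AlgExec A) (O : Set (Fin n)) (b : ℕ) where
  dm : Fin n → Option (Fin n × Fin k)
  mapsSelf : ∀ f : Fin n, E.Completed f → dm f = none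
  mapsAll : ∀ f : Fin n, ¬ E.Completed f → ∃ q : Fin n × Fin k, dm f = some q
  viaValid : ∀ (f : Fin n) (q : Fin n × Fin k), dm f = some q →
    E.firstDropIdx f ≤ (q.2 : ℕ) ∧ ∃ t ≤ E.dropT f, E.deliver t = some q
  capO : ∀ q : Fin n × Fin k, Set.ncard {f : Fin n | f ∈ O ∧ dm f = some q} ≤ 2
  capAll : ∀ q : Fin n × Fin k, Set.ncard {f : Fin n | dm f = some q} ≤ b

namespace PsiMapping

variable {E : AlgExec A} {O : Set (Fin n)} {b : ℕ}

/-- the frame onto which `f` is directly mapped by `ψ` (itself, if `f ∈ F_G`). -/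
def next (M : PsiMapping E O b) (f : Fin n) : Fin n :=
  match M.dm f with
  | some q => q.1
  | none => f

/-- the frame onto which `f` is mapped after `j` successive (re-)mappings of `ψ`. -/
def chain (M : PsiMapping E O b) (f : Fin n) (j : ℕ) : Fin n :=
  (M.next)^[j] f

/-- frame `f` is mapped (directly or indirectly) by `ψ` via the packet `q`;
`M(q)` is the set of frames mapped via `q`. -/
def MappedVia (M : PsiMapping E O b) (f : Fin n) (q : Fin n × Fin k) : Prop :=
  ∃ j : ℕ, M.dm (M.chain f j) = some q

end PsiMapping

end AlgExec

/-!
A packet of a frame `f` that is neither delivered nor dropped in the `d + 1` slots from its arrival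
to its deadline is pending in all of them. In each of these slots `f` must then be alive and be the
frame that is served, for otherwise the packet would be dropped. So `d + 1` distinct other packets
of `f` are delivered, and `f` has at least `d + 2` packets.
-/

namespace AlgExec

variable {n k d : ℕ} {A : ArrivalSeq n k d} {E : AlgExec A} {p : Fin n × Fin k} {s t : ℕ}

/-- `E` follows the proactive dropping policy of `ProactiveGreedy`, but with an arbitrary rule for
selecting the delivered packet among the pending ones. -/
structure IsProactive (E : AlgExec A) : Prop where
  pending_of_deliver {p : Fin n × Fin k} {t : ℕ} : E.deliver t = some p → E.Pending p t
  exists_deliver {f : Fin n} {t : ℕ} :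
    E.Alive f t → E.HasPending f t → ∃ q, E.deliver t = some q
  drop_of_not_alive {p : Fin n × Fin k} {t : ℕ} :
    E.Pending p t → ¬ E.Alive p.1 t → E.dropTime p = some t
  drop_of_deliver {p q : Fin n × Fin k} {t : ℕ} :
    E.Pending p t → E.deliver t = some q → q.1 ≠ p.1 → E.dropTime p = some t

theorem PGValid.isProactive (hE : E.PGValid) : E.IsProactive := by
  obtain ⟨deliver_spec, deliver_ne_none, drop_iff⟩ := hE
  exact
    { pending_of_deliver := fun h => (deliver_spec _ _ _ h).2.1
      exists_deliver := fun halive hpend =>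
        Option.ne_none_iff_exists'.mp (deliver_ne_none _ ⟨_, halive, hpend⟩)
      drop_of_not_alive := fun hpend h => (drop_iff _ _).mpr ⟨hpend, .inl h⟩
      drop_of_deliver := fun hpend hq hne => (drop_iff _ _).mpr ⟨hpend, .inr ⟨_, hq, hne⟩⟩ }

theorem IsProactive.deliver_unique (hE : E.IsProactive) (hs : E.deliver s = some p)
    (ht : E.deliver t = some p) : s = t := by
  have le_of_deliver {s t : ℕ} (hs : E.deliver s = some p) (ht : E.deliver t = some p) : t ≤ s :=
    not_lt.mp fun hst => (hE.pending_of_deliver ht).2.2.1 ⟨s, hst, hs⟩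
  exact le_antisymm (le_of_deliver ht hs) (le_of_deliver hs ht)

theorem IsProactive.exists_deliver_same_frame (hE : E.IsProactive) (hp : E.Pending p t)
    (hdrop : E.dropTime p ≠ some t) : ∃ j, E.deliver t = some (p.1, j) := by
  have halive : E.Alive p.1 t := by
    by_contra h
    exact hdrop (hE.drop_of_not_alive hp h)
  obtain ⟨⟨f, j⟩, hq⟩ := hE.exists_deliver halive ⟨p.2, hp⟩
  obtain rfl : f = p.1 := by
    by_contra h
    exact hdrop (hE.drop_of_deliver hp hq h)
  exact ⟨j, hq⟩

/-- The packet `p` expires in `E`: its deadline passes without it being delivered or dropped. -/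
def Expires (E : AlgExec A) (p : Fin n × Fin k) : Prop :=
  ∀ t ≤ A.a p.1 p.2 + d, E.deliver t ≠ some p ∧ E.dropTime p ≠ some t

theorem not_expires_iff :
    ¬ E.Expires p ↔ (∃ t ≤ A.a p.1 p.2 + d, E.deliver t = some p) ∨
      (∃ t ≤ A.a p.1 p.2 + d, E.dropTime p = some t) := by
  unfold Expires
  grind

theorem Expires.pending (hp : E.Expires p) (harrive : A.a p.1 p.2 ≤ t)
    (hdeadline : t ≤ A.a p.1 p.2 + d) : E.Pending p t :=
  ⟨harrive, hdeadline, fun ⟨s, hst, hs⟩ => (hp s (hst.le.trans hdeadline)).1 hs,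
    fun ⟨s, hst, hs⟩ => (hp s (hst.le.trans hdeadline)).2 hs⟩

theorem IsProactive.lt_of_expires (hE : E.IsProactive) (hp : E.Expires p) : d + 1 < k := by
  have in_window (i : Fin (d + 1)) : A.a p.1 p.2 + i ≤ A.a p.1 p.2 + d := by omega
  have frame_served (i : Fin (d + 1)) : ∃ j, E.deliver (A.a p.1 p.2 + i) = some (p.1, j) :=
    hE.exists_deliver_same_frame (hp.pending (Nat.le_add_right _ _) (in_window i))
      (hp _ (in_window i)).2
  choose served hserved using frame_served
  have served_injective : Function.Injective served := fun i i' h =>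
    Fin.ext (Nat.add_left_cancel (hE.deliver_unique (hserved i) (h ▸ hserved i')))
  have not_served : p.2 ∉ Set.range served := by
    rintro ⟨i, hi⟩
    exact (hp _ (in_window i)).1 (by rw [hserved i, hi])
  exact Fin.lt_of_injective_of_notMem served served_injective not_served

end AlgExec

theorem pg_no_packet_expires_general {n k d : ℕ} (hkd : k ≤ d + 1)
    {A : ArrivalSeq n k d} {E : AlgExec A} (hE : E.IsProactive) (p : Fin n × Fin k) :
    (∃ t ≤ A.a p.1 p.2 + d, E.deliver t = some p) ∨
    (∃ t ≤ A.a p.1 p.2 + d, E.dropTime p = some t) :=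
  AlgExec.not_expires_iff.mp fun hp => hkd.not_gt (hE.lt_of_expires hp)

/-- In any execution of `ProactiveGreedy` on a `d`-uniform arrival
sequence with `k ≤ d` packets per frame, no packet ever expires: every arriving packet
is either delivered by its deadline, or is proactively dropped by the algorithm no
later than its deadline (hence strictly before its deadline forces expiry). -/
theorem pg_no_packet_expires (n k d : ℕ) (hkd : k ≤ d)
    (A : ArrivalSeq n k d) (E : AlgExec A) (hE : E.PGValid) :
    ∀ p : Fin n × Fin k,
      (∃ t ≤ A.a p.1 p.2 + d, E.deliver t = some p) ∨
      (∃ t ≤ A.a p.1 p.2 + d, E.dropTime p = some t) :=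
  pg_no_packet_expires_general (Nat.le_succ_of_le hkd) hE.isProactive
end

section
/- In any execution of algorithm ProactiveGreedy, if a frame f is not completed by ProactiveGreedy (f ∉ F_PG), then there exists a time t = t_f such that f is alive at t, the packet of f with index I_t(f) is dropped by ProactiveGreedy at time t, and ProactiveGreedy delivers at time t a packet p' belonging to some frame f'. -/
/-!
While a frame `f` is alive, its packets are dropped only in a slot that serves another frame. If
this never happens, `f` can only die because a packet expires undelivered; but that packet is then
pending in `d + 1` consecutive slots, each of which delivers a different one of the other `k - 1`
packets of `f`, and `k - 1 < d + 1`.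
-/

namespace AlgExec

variable {n k d : ℕ} {A : ArrivalSeq n k d} {E : AlgExec A} {f : Fin n} {ℓ : Fin k} {s t : ℕ}

theorem alive_zero : E.Alive f 0 :=
  fun _ ↦ ⟨fun ⟨_, hr, _⟩ ↦ absurd hr (Nat.not_lt_zero _), fun h ↦ absurd h (Nat.not_lt_zero _)⟩

theorem Alive.anti (ht : E.Alive f t) (hst : s ≤ t) : E.Alive f s :=
  fun ℓ ↦ ⟨fun ⟨r, hr, hdrop⟩ ↦ (ht ℓ).1 ⟨r, hr.trans_le hst, hdrop⟩,
    fun h ↦ (ht ℓ).2 (h.trans_le hst)⟩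

theorem Alive.succ (ht : E.Alive f t) (hdrop : ∀ ℓ, E.dropTime (f, ℓ) ≠ some t)
    (hexp : ∀ ℓ, A.a f ℓ + d = t → E.DeliveredBy (f, ℓ) t) : E.Alive f (t + 1) := by
  refine fun ℓ ↦ ⟨?_, fun hlt ↦ ?_⟩
  · rintro ⟨r, hr, hdropr⟩
    rcases Nat.lt_succ_iff_lt_or_eq.mp hr with hr | rfl
    · exact (ht ℓ).1 ⟨r, hr, hdropr⟩
    · exact hdrop ℓ hdropr
  · rcases Nat.lt_succ_iff_lt_or_eq.mp hlt with hlt | heq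
    · exact (ht ℓ).2 hlt
    · rw [heq]
      exact hexp ℓ heq

theorem completed_of_forall_alive (h : ∀ t, E.Alive f t) : E.Completed f := fun ℓ ↦
  let ⟨s, _, hs⟩ := (h (A.a f ℓ + d + 1) ℓ).2 (Nat.lt_succ_self _)
  ⟨s, hs⟩

theorem HasPending.pending_Iidx (h : E.HasPending f t) :
    ∃ hk : E.Iidx t f < k, E.Pending (f, ⟨E.Iidx t f, hk⟩) t :=
  let ⟨ℓ, hℓ⟩ := h
  Nat.sInf_mem (s := {i | ∃ hk : i < k, E.Pending (f, ⟨i, hk⟩) t}) ⟨ℓ, ℓ.2, hℓ⟩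

theorem card_lt_of_forall_deliver_ne {T : Finset ℕ}
    (honce : ∀ p s t, E.deliver s = some p → E.deliver t = some p → s = t)
    (hT : ∀ t ∈ T, ∃ j ≠ ℓ, E.deliver t = some (f, j)) : T.card < k := by
  have : Nonempty (Fin k) := ⟨ℓ⟩
  choose! g hgℓ hg using hT
  have hmaps : ∀ t ∈ T, g t ∈ Finset.univ.erase ℓ := fun t ht ↦
    Finset.mem_erase.mpr ⟨hgℓ t ht, Finset.mem_univ _⟩
  have hinj : Set.InjOn g T := fun s hs t ht hst ↦
    honce (f, g s) s t (hg s hs) (hst ▸ hg t ht)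
  calc
    T.card ≤ (Finset.univ.erase ℓ).card := Finset.card_le_card_of_injOn g hmaps hinj
    _ < (Finset.univ : Finset (Fin k)).card := Finset.card_erase_lt_of_mem (Finset.mem_univ ℓ)
    _ = k := Finset.card_fin k

/-- Executions of `ProactiveGreedy` with the choice of the frame served in each slot left open:
only the work-conserving delivery of pending packets and the dropping rule of `PGValid` are kept. -/
structure IsProactive_s5 (E : AlgExec A) : Prop where
  pending_of_deliver : ∀ p t, E.deliver t = some p → E.Pending p t
  deliver_ne_none : ∀ f t, E.Alive f t → E.HasPending f t → E.deliver t ≠ none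
  dropTime_eq_some_iff : ∀ p t, E.dropTime p = some t ↔
    E.Pending p t ∧ (¬ E.Alive p.1 t ∨ ∃ q, E.deliver t = some q ∧ q.1 ≠ p.1)

theorem PGValid.isProactive_s5 (hE : E.PGValid) : E.IsProactive_s5 where
  pending_of_deliver p t h := (hE.1 t p.1 p.2 h).2.1
  deliver_ne_none f t ha hp := hE.2.1 t ⟨f, ha, hp⟩
  dropTime_eq_some_iff := hE.2.2

/-- In slot `t` the alive frame `f` with pending packets loses to another frame; these are the
candidates for the time `t_f`. -/
def Preempted (E : AlgExec A) (f : Fin n) (t : ℕ) : Prop :=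
  E.Alive f t ∧ E.HasPending f t ∧ ∃ q, E.deliver t = some q ∧ q.1 ≠ f

namespace IsProactive_s5

theorem deliver_once (hE : E.IsProactive_s5) (p : Fin n × Fin k) (s t : ℕ)
    (hs : E.deliver s = some p) (ht : E.deliver t = some p) : s = t := by
  have hle {s t : ℕ} (hs : E.deliver s = some p) (ht : E.deliver t = some p) : t ≤ s :=
    not_lt.mp fun hst ↦ (hE.pending_of_deliver p t ht).2.2.1 ⟨s, hst, hs⟩
  exact le_antisymm (hle ht hs) (hle hs ht)

theorem exists_deliver_of_not_preempted (hE : E.IsProactive_s5) (ha : E.Alive f t)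
    (hp : E.HasPending f t) (hnot : ¬ E.Preempted f t) : ∃ j, E.deliver t = some (f, j) := by
  obtain ⟨⟨f', j⟩, hq⟩ := Option.ne_none_iff_exists'.mp (hE.deliver_ne_none f t ha hp)
  obtain rfl : f' = f := by_contra fun hne ↦ hnot ⟨ha, hp, (f', j), hq, hne⟩
  exact ⟨j, hq⟩

theorem preempted_of_dropTime (hE : E.IsProactive_s5) (ha : E.Alive f t)
    (hdrop : E.dropTime (f, ℓ) = some t) : E.Preempted f t :=
  let ⟨hp, hcause⟩ := (hE.dropTime_eq_some_iff (f, ℓ) t).mp hdrop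
  ⟨ha, ⟨ℓ, hp⟩, hcause.resolve_left (not_not_intro ha)⟩

theorem exists_dropTime_Iidx (hE : E.IsProactive_s5) (h : E.Preempted f t) :
    ∃ hk : E.Iidx t f < k, E.dropTime (f, ⟨E.Iidx t f, hk⟩) = some t :=
  let ⟨_, hp, hother⟩ := h
  let ⟨hk, hfirst⟩ := hp.pending_Iidx
  ⟨hk, (hE.dropTime_eq_some_iff _ t).mpr ⟨hfirst, Or.inr hother⟩⟩

theorem exists_preempted_of_not_deliveredBy (hE : E.IsProactive_s5) (hkd : k ≤ d + 1)
    (ha : E.Alive f (A.a f ℓ + d)) (hnot : ¬ E.DeliveredBy (f, ℓ) (A.a f ℓ + d)) :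
    ∃ t, E.Preempted f t := by
  by_contra! hpre
  have hserved : ∀ t ∈ Finset.Icc (A.a f ℓ) (A.a f ℓ + d),
      ∃ j ≠ ℓ, E.deliver t = some (f, j) := by
    intro t ht
    obtain ⟨harr, hdead⟩ := Finset.mem_Icc.mp ht
    have hat : E.Alive f t := ha.anti hdead
    have hpend : E.Pending (f, ℓ) t :=
      ⟨harr, hdead, fun ⟨s, hs, hdel⟩ ↦ hnot ⟨s, hs.le.trans hdead, hdel⟩, (hat ℓ).1⟩
    obtain ⟨j, hj⟩ := hE.exists_deliver_of_not_preempted hat ⟨ℓ, hpend⟩ (hpre t)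
    exact ⟨j, fun hjℓ ↦ hnot ⟨t, hdead, hjℓ ▸ hj⟩, hj⟩
  have hcard : (Finset.Icc (A.a f ℓ) (A.a f ℓ + d)).card < k :=
    card_lt_of_forall_deliver_ne hE.deliver_once hserved
  rw [Nat.card_Icc] at hcard
  omega

theorem exists_preempted_of_not_completed (hE : E.IsProactive_s5) (hkd : k ≤ d + 1)
    (hf : ¬ E.Completed f) : ∃ t, E.Preempted f t := by
  by_contra! hpre
  refine hf (completed_of_forall_alive fun t ↦ ?_)
  induction t with
  | zero => exact alive_zero
  | succ t ha =>
    refine ha.succ (fun ℓ hdrop ↦ hpre t (hE.preempted_of_dropTime ha hdrop)) ?_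
    rintro ℓ rfl
    by_contra hnot
    obtain ⟨s, hs⟩ := hE.exists_preempted_of_not_deliveredBy hkd ha hnot
    exact hpre s hs

end IsProactive_s5

end AlgExec

theorem pg_mapping_target_exists_general {n k d : ℕ} (hkd : k ≤ d + 1)
    {A : ArrivalSeq n k d} {E : AlgExec A} (hE : E.IsProactive_s5) {f : Fin n}
    (hf : ¬ E.Completed f) :
    ∃ (t : ℕ) (h : E.Iidx t f < k),
      E.Alive f t ∧ E.dropTime (f, ⟨E.Iidx t f, h⟩) = some t ∧
      ∃ q : Fin n × Fin k, E.deliver t = some q ∧ q.1 ≠ f := by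
  obtain ⟨t, hpre⟩ := hE.exists_preempted_of_not_completed hkd hf
  obtain ⟨h, hdrop⟩ := hE.exists_dropTime_Iidx hpre
  obtain ⟨ha, -, hother⟩ := hpre
  exact ⟨t, h, ha, hdrop, hother⟩

/-- In any execution of `ProactiveGreedy`, if a frame `f` is not
completed by `ProactiveGreedy` (`f ∉ F_PG`), then there exists a time `t = t_f` such
that `f` is alive at `t`, the packet of `f` with index `I_t(f)` is dropped by
`ProactiveGreedy` at time `t`, and `ProactiveGreedy` delivers at time `t` a packet `q`
belonging to some frame. -/
theorem pg_mapping_target_exists (n k d : ℕ) (hkd : k ≤ d)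
    (A : ArrivalSeq n k d) (E : AlgExec A) (hE : E.PGValid) :
    ∀ f : Fin n, ¬ E.Completed f →
      ∃ (t : ℕ) (h : E.Iidx t f < k),
        E.Alive f t ∧ E.dropTime (f, ⟨E.Iidx t f, h⟩) = some t ∧
        ∃ q : Fin n × Fin k, E.deliver t = some q := by
  intro f hf
  obtain ⟨t, h, ha, hdrop, q, hq, -⟩ :=
    pg_mapping_target_exists_general (Nat.le_succ_of_le hkd) hE.isProactive_s5 hf
  exact ⟨t, h, ha, hdrop, q, hq⟩
end

section
/- In any execution of algorithm ProactiveGreedy, if a frame f ∉ F_PG is directly mapped by the mapping φ to a frame f', then w(f') > w(f), where w(g) denotes the number of packets of frame g delivered by ProactiveGreedy. -/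
/-!
Let `t` be the first time at which `PG` drops a packet of `f`, and let `q` be the packet it delivers
at `t`. Packets of a frame are delivered in index order, so `f`, which is never served again,
has `w f ≤ I_t(f)`, while the frame of `q` has already received all packets up to `q`, so that
`q.2 < w q.1`. If `f` is still alive at `t`, the choice of `q` gives `I_t(f) ≤ q.2`, and the two
bounds combine.

A frame is indeed alive until its first drop: a packet that expires undelivered and undropped has
watched earlier packets of its own frame being delivered in each of the `d + 1` slots of its
lifetime, but fewer than `k ≤ d + 1` packets precede it.
-/

namespace AlgExec

section Basic

variable {n k d : ℕ} {A : ArrivalSeq n k d} {E : AlgExec A} {f : Fin n} {ℓ : Fin k}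
  {p : Fin n × Fin k} {s t : ℕ}

theorem DroppedBefore.mono (h : E.DroppedBefore p s) (hst : s ≤ t) : E.DroppedBefore p t :=
  h.imp fun _ hr => ⟨hr.1.trans_le hst, hr.2⟩

theorem Pending.of_le (h : E.Pending p t) (hst : s ≤ t) (ha : A.a p.1 p.2 ≤ s) :
    E.Pending p s := by
  obtain ⟨-, hdeadline, hdeliver, hdrop⟩ := h
  refine ⟨ha, hst.trans hdeadline, ?_, fun h => hdrop (h.mono hst)⟩
  rintro ⟨r, hr, hrp⟩
  exact hdeliver ⟨r, hr.trans_le hst, hrp⟩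

theorem Alive.of_le (h : E.Alive f t) (hst : s ≤ t) : E.Alive f s := fun ℓ =>
  ⟨fun hdrop => (h ℓ).1 (hdrop.mono hst), fun hdeadline => (h ℓ).2 (hdeadline.trans_le hst)⟩

theorem Alive.delivered_of_not_pending (hf : E.Alive f t) (ha : A.a f ℓ ≤ t)
    (hp : ¬ E.Pending (f, ℓ) t) : E.Delivered (f, ℓ) := by
  by_contra hnot
  have hdeadline : t ≤ A.a f ℓ + d := by
    by_contra! hlt
    obtain ⟨s, -, hs⟩ := (hf ℓ).2 hlt
    exact hnot ⟨s, hs⟩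
  exact hp ⟨ha, hdeadline, fun ⟨s, _, hs⟩ => hnot ⟨s, hs⟩, (hf ℓ).1⟩

theorem Pending.Iidx_le (h : E.Pending (f, ℓ) t) : E.Iidx t f ≤ ℓ :=
  Nat.sInf_le ⟨ℓ.isLt, h⟩

theorem HasPending.exists_pending_val_eq_Iidx (h : E.HasPending f t) :
    ∃ ℓ : Fin k, E.Pending (f, ℓ) t ∧ (ℓ : ℕ) = E.Iidx t f := by
  obtain ⟨ℓ, hℓ⟩ := h
  obtain ⟨hlt, hpending⟩ : ∃ h : E.Iidx t f < k, E.Pending (f, ⟨E.Iidx t f, h⟩) t :=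
    Nat.sInf_mem (s := {i : ℕ | ∃ h : i < k, E.Pending (f, ⟨i, h⟩) t}) ⟨ℓ, ℓ.isLt, hℓ⟩
  exact ⟨_, hpending, rfl⟩

theorem dropT_le (h : E.dropTime (f, ℓ) = some t) : E.dropT f ≤ t :=
  Nat.sInf_le ⟨ℓ, h⟩

theorem exists_dropTime_eq_dropT (h : E.dropTime (f, ℓ) = some t) :
    ∃ j : Fin k, E.dropTime (f, j) = some (E.dropT f) :=
  Nat.sInf_mem (s := {t : ℕ | ∃ j : Fin k, E.dropTime (f, j) = some t}) ⟨t, ℓ, h⟩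

theorem not_droppedBefore_dropT : ¬ E.DroppedBefore (f, ℓ) (E.dropT f) :=
  fun ⟨_, hlt, hs⟩ => (dropT_le hs).not_gt hlt

end Basic

namespace PGValid

variable {n k d : ℕ} {A : ArrivalSeq n k d} {E : AlgExec A} {f : Fin n} {ℓ j : Fin k}
  {p q : Fin n × Fin k} {s t : ℕ}

theorem alive (hE : E.PGValid) (hq : E.deliver t = some q) : E.Alive q.1 t :=
  (hE.1 t q.1 q.2 hq).1

theorem pending (hE : E.PGValid) (hq : E.deliver t = some q) : E.Pending q t :=
  (hE.1 t q.1 q.2 hq).2.1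

theorem val_eq_Iidx (hE : E.PGValid) (hq : E.deliver t = some q) : (q.2 : ℕ) = E.Iidx t q.1 :=
  (hE.1 t q.1 q.2 hq).2.2.1

theorem Iidx_le_val (hE : E.PGValid) (hq : E.deliver t = some q) (hf : E.Alive f t)
    (hp : E.HasPending f t) : E.Iidx t f ≤ q.2 :=
  ((hE.1 t q.1 q.2 hq).2.2.2 f hf hp).trans_eq (hE.val_eq_Iidx hq).symm

theorem dropTime_eq (hE : E.PGValid) (hq : E.deliver t = some q) (hne : q.1 ≠ p.1)
    (hp : E.Pending p t) : E.dropTime p = some t :=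
  (hE.2.2 p t).mpr ⟨hp, .inr ⟨q, hq, hne⟩⟩

theorem deliver_unique (hE : E.PGValid) (hs : E.deliver s = some p) (ht : E.deliver t = some p) :
    s = t := by
  have h_not_lt {s t : ℕ} (hs : E.deliver s = some p) (ht : E.deliver t = some p) : ¬ s < t :=
    fun hlt => (hE.pending ht).2.2.1 ⟨s, hlt, hs⟩
  exact le_antisymm (not_lt.mp (h_not_lt ht hs)) (not_lt.mp (h_not_lt hs ht))

theorem deliver_le_dropTime (hE : E.PGValid) (hs : E.deliver s = some (f, j))
    (ht : E.dropTime (f, ℓ) = some t) : s ≤ t := by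
  by_contra! hlt
  exact (hE.alive hs ℓ).1 ⟨t, hlt, ht⟩

theorem val_le_of_pending (hE : E.PGValid) (hs : E.deliver s = some (f, j))
    (hp : E.Pending (f, ℓ) s) : j ≤ ℓ :=
  Fin.le_def.mpr ((hE.val_eq_Iidx hs).trans_le hp.Iidx_le)

theorem lt_of_deliver_of_pending (hE : E.PGValid) (hs : E.deliver s = some (f, j)) (hst : s < t)
    (hp : E.Pending (f, ℓ) t) : j < ℓ := by
  by_contra! hle
  have hps : E.Pending (f, ℓ) s :=
    hp.of_le hst.le ((A.mono f hle).trans (hE.pending hs).1)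
  obtain rfl : j = ℓ := le_antisymm (hE.val_le_of_pending hs hps) hle
  exact hp.2.2.1 ⟨s, hst, hs⟩

theorem delivered_of_le (hE : E.PGValid) (hq : E.deliver t = some q) (hj : j ≤ q.2) :
    E.Delivered (q.1, j) := by
  rcases hj.eq_or_lt with rfl | hlt
  · exact ⟨t, hq⟩
  · refine (hE.alive hq).delivered_of_not_pending ((A.mono q.1 hj).trans (hE.pending hq).1) ?_
    exact fun hp => (hE.val_le_of_pending hq hp).not_gt hlt

theorem val_lt_w (hE : E.PGValid) (hq : E.deliver t = some q) : (q.2 : ℕ) < E.w q.1 := by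
  have hsub : Set.Iic q.2 ⊆ {j | E.Delivered (q.1, j)} := fun _ hj => hE.delivered_of_le hq hj
  calc (q.2 : ℕ) < (Set.Iic q.2).ncard := by simp [Set.ncard_eq_toFinset_card']
    _ ≤ E.w q.1 := Set.ncard_le_ncard hsub

theorem w_le_of_pending (hE : E.PGValid) (hq : E.deliver t = some q) (hne : q.1 ≠ f)
    (hp : E.Pending (f, ℓ) t) : E.w f ≤ ℓ := by
  have hsub : {j | E.Delivered (f, j)} ⊆ Set.Iio ℓ := by
    rintro j ⟨s, hs⟩
    have hle : s ≤ t := hE.deliver_le_dropTime hs (hE.dropTime_eq hq hne hp)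
    have hst : s ≠ t := by
      rintro rfl
      exact hne (congrArg Prod.fst (Option.some.inj (hq.symm.trans hs)))
    exact hE.lt_of_deliver_of_pending hs (hle.lt_of_ne hst) hp
  calc E.w f ≤ (Set.Iio ℓ).ncard := Set.ncard_le_ncard hsub
    _ = ℓ := by simp [Set.ncard_eq_toFinset_card']

theorem w_lt_w (hE : E.PGValid) (hq : E.deliver t = some q) (hne : q.1 ≠ f)
    (hf : E.Alive f t) (hp : E.HasPending f t) : E.w f < E.w q.1 := by
  obtain ⟨ℓ, hpℓ, hℓ⟩ := hp.exists_pending_val_eq_Iidx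
  calc E.w f ≤ ℓ := hE.w_le_of_pending hq hne hpℓ
    _ = E.Iidx t f := hℓ
    _ ≤ q.2 := hE.Iidx_le_val hq hf hp
    _ < E.w q.1 := hE.val_lt_w hq

theorem card_le_card_of_forall_deliver (hE : E.PGValid) {S : Finset ℕ} {J : Finset (Fin k)}
    (h : ∀ s ∈ S, ∃ j ∈ J, E.deliver s = some (f, j)) : S.card ≤ J.card :=
  Finset.card_le_card_of_forall_subsingleton (fun s j => E.deliver s = some (f, j)) h
    fun _ _ _ hs _ ht => hE.deliver_unique hs.2 ht.2

theorem exists_deliver_of_pending (hE : E.PGValid) (hf : E.Alive f t) (hp : E.Pending (f, ℓ) t)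
    (hdrop : E.dropTime (f, ℓ) ≠ some t) : ∃ j, E.deliver t = some (f, j) := by
  obtain ⟨⟨g, j⟩, hq⟩ := Option.ne_none_iff_exists'.mp (hE.2.1 t ⟨f, hf, ℓ, hp⟩)
  obtain rfl : g = f := by
    by_contra hne
    exact hdrop (hE.dropTime_eq hq hne hp)
  exact ⟨j, hq⟩

theorem deliveredBy_deadline (hE : E.PGValid) (hℓ : (ℓ : ℕ) ≤ d)
    (hf : E.Alive f (A.a f ℓ + d)) (hdrop : E.dropTime (f, ℓ) ≠ some (A.a f ℓ + d)) :
    E.DeliveredBy (f, ℓ) (A.a f ℓ + d) := by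
  by_contra hnot
  have hpending : E.Pending (f, ℓ) (A.a f ℓ + d) :=
    ⟨Nat.le_add_right _ _, le_rfl, fun ⟨s, hlt, hs⟩ => hnot ⟨s, hlt.le, hs⟩, (hf ℓ).1⟩
  have hserved : ∀ s ∈ Finset.Icc (A.a f ℓ) (A.a f ℓ + d),
      ∃ j ∈ Finset.Iio ℓ, E.deliver s = some (f, j) := by
    intro s hs
    obtain ⟨has, hsd⟩ := Finset.mem_Icc.mp hs
    have hps : E.Pending (f, ℓ) s := hpending.of_le hsd has
    have hdrops : E.dropTime (f, ℓ) ≠ some s := by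
      rcases hsd.eq_or_lt with rfl | hlt
      · exact hdrop
      · exact fun h => (hf ℓ).1 ⟨s, hlt, h⟩
    obtain ⟨j, hj⟩ := hE.exists_deliver_of_pending (hf.of_le hsd) hps hdrops
    have hjℓ : j ≠ ℓ := by
      rintro rfl
      exact hnot ⟨s, hsd, hj⟩
    exact ⟨j, Finset.mem_Iio.mpr ((hE.val_le_of_pending hj hps).lt_of_ne hjℓ), hj⟩
  have hcard := hE.card_le_card_of_forall_deliver hserved
  rw [Nat.card_Icc, Fin.card_Iio] at hcard
  omega

theorem alive_of_not_droppedBefore (hE : E.PGValid) (hkd : k ≤ d + 1)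
    (hdrop : ∀ ℓ : Fin k, ¬ E.DroppedBefore (f, ℓ) t) : E.Alive f t := by
  induction t with
  | zero => exact fun ℓ => ⟨hdrop ℓ, fun hlt => absurd hlt (Nat.not_lt_zero _)⟩
  | succ t ih =>
    have hf : E.Alive f t := ih fun ℓ h => hdrop ℓ (h.mono t.le_succ)
    refine fun ℓ => ⟨hdrop ℓ, fun hlt => ?_⟩
    rcases (Nat.lt_succ_iff.mp hlt).eq_or_lt with rfl | hlt
    · exact hE.deliveredBy_deadline (by omega) hf fun h => hdrop ℓ ⟨_, Nat.lt_succ_self _, h⟩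
    · exact (hf ℓ).2 hlt

theorem alive_dropT (hE : E.PGValid) (hkd : k ≤ d + 1) : E.Alive f (E.dropT f) :=
  hE.alive_of_not_droppedBefore hkd fun _ => not_droppedBefore_dropT

theorem exists_dropTime_of_not_completed (hE : E.PGValid) (hkd : k ≤ d + 1)
    (hf : ¬ E.Completed f) : ∃ ℓ t, E.dropTime (f, ℓ) = some t := by
  by_contra! hdrop
  refine hf fun ℓ => ?_
  have halive : E.Alive f (A.a f ℓ + d + 1) :=
    hE.alive_of_not_droppedBefore hkd fun j ⟨s, _, hs⟩ => hdrop j s hs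
  obtain ⟨s, -, hs⟩ := (halive ℓ).2 (Nat.lt_succ_self _)
  exact ⟨s, hs⟩

end PGValid

end AlgExec

/-- In any execution of `ProactiveGreedy`, if a frame `f ∉ F_PG` is
directly mapped by the mapping `φ` to a frame `f'` (i.e. some packet `q` of `f'` is
delivered by `ProactiveGreedy` at the time `t_f` at which the first packet of `f` is
dropped), then `w f' > w f`, where `w g` denotes the number of packets of frame `g`
delivered by `ProactiveGreedy`. -/
theorem pg_mapping_weight_monotone (n k d : ℕ) (hkd : k ≤ d)
    (A : ArrivalSeq n k d) (E : AlgExec A) (hE : E.PGValid) :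
    ∀ f : Fin n, ¬ E.Completed f →
      ∀ q : Fin n × Fin k, E.deliver (E.dropT f) = some q →
        E.w f < E.w q.1 := by
  intro f hf q hq
  have hkd' : k ≤ d + 1 := Nat.le_succ_of_le hkd
  obtain ⟨_, _, hdrop⟩ := hE.exists_dropTime_of_not_completed hkd' hf
  obtain ⟨ℓ, hℓ⟩ := AlgExec.exists_dropTime_eq_dropT hdrop
  have halive : E.Alive f (E.dropT f) := hE.alive_dropT hkd'
  obtain ⟨hpending, hdead | ⟨q', hq', hne⟩⟩ := (hE.2.2 _ _).mp hℓ
  · exact absurd halive hdead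
  · obtain rfl : q' = q := Option.some.inj (hq'.symm.trans hq)
    exact hE.w_lt_w hq hne halive ⟨ℓ, hpending⟩
end
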